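/- arXiv:2602.08780 — 2 statements merged into one kernel-verified Lean document; each statement's English description precedes it below -/
import Mathlib

section
/- Fix natural numbers N, t, s with t + s ≤ N. Then (α, β) satisfies the (t, s) semi-insdel non-deformation conditions (C4) if and only if (α, β) satisfies the (t+s)-deletion non-deformation conditions. (This is the combinatorial core of Lemma 2: the semi-insdel conditions for s deletions followed by t insertions are equivalent to the (t+s)-deletion conditions of Aydin et al.) -/
open Finset

theorem pascal_sum_aux (N n a b : ℕ) (g : ℕ → ℕ → ℂ) (hg : ∀ x y, N < x → g x y = 0) :
    ∑ k ∈ Finset.range (N + 1), ((n + 1).choose k : ℂ) * g (k + a) (k + b) =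
      ∑ k ∈ Finset.range (N + 1), (n.choose k : ℂ) * g (k + a) (k + b) +
      ∑ k ∈ Finset.range (N + 1), (n.choose k : ℂ) * g (k + (a + 1)) (k + (b + 1)) := by
  rw [Finset.sum_range_succ', Finset.sum_range_succ' (fun k => (n.choose k : ℂ) * g (k + a) (k + b)),
    Finset.sum_range_succ (fun k => (n.choose k : ℂ) * g (k + (a + 1)) (k + (b + 1))),
    hg (N + (a + 1)) _ (by omega)]
  have h : ∀ k ∈ Finset.range N, ((n + 1).choose (k + 1) : ℂ) * g (k + 1 + a) (k + 1 + b) =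
      (n.choose (k + 1) : ℂ) * g (k + 1 + a) (k + 1 + b) +
      (n.choose k : ℂ) * g (k + (a + 1)) (k + (b + 1)) := by
    intro k _
    rw [Nat.choose_succ_succ, show k + (a + 1) = k + 1 + a by ring,
      show k + (b + 1) = k + 1 + b by ring]
    push_cast
    ring
  rw [Finset.sum_congr rfl h, Finset.sum_add_distrib]
  simp only [Nat.choose_zero_right]
  ring

theorem semiInsdel_iff_deletion_nonDeformation
    (N t s : ℕ) (hts : t + s ≤ N)
    (α β : ℕ → ℂ) (hα : ∀ k : ℕ, N < k → α k = 0) (hβ : ∀ k : ℕ, N < k → β k = 0) :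
    (∀ j a' b' : ℕ, j ≤ t → a' ≤ t + s - j → b' ≤ t + s - j →
      ∑ k ∈ Finset.range (N + 1), ((N - t - s + j).choose k : ℂ) / ((Real.sqrt ((N.choose (k + a') * N.choose (k + b') : ℕ)) : ℝ) : ℂ) * ((starRingEnd ℂ) (α (k + a')) * α (k + b') - (starRingEnd ℂ) (β (k + a')) * β (k + b')) = 0) ↔
    (∀ a' b' : ℕ, a' ≤ t + s → b' ≤ t + s →
      ∑ k ∈ Finset.range (N + 1), ((N - (t + s)).choose k : ℂ) / ((Real.sqrt ((N.choose (k + a') * N.choose (k + b') : ℕ)) : ℝ) : ℂ) * ((starRingEnd ℂ) (α (k + a')) * α (k + b') - (starRingEnd ℂ) (β (k + a')) * β (k + b')) = 0) := by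
  obtain ⟨g, hgd⟩ : ∃ g : ℕ → ℕ → ℂ, g = (fun x y : ℕ => (((Real.sqrt ((N.choose x * N.choose y : ℕ)) : ℝ) : ℂ))⁻¹ * ((starRingEnd ℂ) (α x) * α y - (starRingEnd ℂ) (β x) * β y)) := ⟨_, rfl⟩
  have key : ∀ n a b : ℕ, ∑ k ∈ Finset.range (N + 1), (n.choose k : ℂ) / ((Real.sqrt ((N.choose (k + a) * N.choose (k + b) : ℕ)) : ℝ) : ℂ) * ((starRingEnd ℂ) (α (k + a)) * α (k + b) - (starRingEnd ℂ) (β (k + a)) * β (k + b)) =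
      ∑ k ∈ Finset.range (N + 1), (n.choose k : ℂ) * g (k + a) (k + b) := by
    intro n a b
    refine Finset.sum_congr rfl fun k _ => ?_
    simp only [hgd, div_eq_mul_inv, mul_assoc]
  simp only [key]
  have hg : ∀ x y, N < x → g x y = 0 := by
    intro x y hx
    simp [hgd, hα x hx, hβ x hx]
  rw [← Nat.sub_sub]
  constructor
  · intro h a b ha hb
    exact h 0 a b (Nat.zero_le _) ha hb
  · intro h j
    induction j with
    | zero => intro a b _ ha hb; exact h a b ha hb
    | succ j ih =>
      intro a b hj ha hb
      rw [← Nat.add_assoc, pascal_sum_aux N _ a b g hg, ih a b (by omega) (by omega) (by omega),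
        ih (a + 1) (b + 1) (by omega) (by omega) (by omega), add_zero]
end

section
/- Fix natural numbers N, t, s with t + s ≤ N. Then (α, β) satisfies the (t+s)-insertion orthogonality conditions (C1) if and only if (α, β) satisfies the (t, s) semi-insdel orthogonality conditions (C3). (Hence for permutation-invariant codes, correcting t insertions together with s deletions imposes the same orthogonality constraints as correcting t+s pure insertions.) -/
open Finset

theorem pascal_sum_aux_s12 (N m : ℕ) (f : ℕ → ℂ) (hf : f (N + 1) = 0) :
    ∑ k ∈ Finset.range (N + 1), ((m + 1).choose k : ℂ) * f k =
      ∑ k ∈ Finset.range (N + 1), (m.choose k : ℂ) * f k +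
      ∑ k ∈ Finset.range (N + 1), (m.choose k : ℂ) * f (k + 1) := by
  have h1 : ∑ k ∈ Finset.range (N + 1), (m.choose k : ℂ) * f (k + 1) =
      ∑ k ∈ Finset.range N, (m.choose k : ℂ) * f (k + 1) := by
    rw [Finset.sum_range_succ, hf]; simp
  rw [h1, Finset.sum_range_succ', Finset.sum_range_succ' (fun k => (m.choose k : ℂ) * f k)]
  simp only [Nat.choose_succ_succ', Nat.cast_add, add_mul, Finset.sum_add_distrib,
    Nat.choose_zero_right]
  ring

theorem insertion_iff_semiInsdel_orthogonality
    (N t s : ℕ) (hts : t + s ≤ N)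
    (α β : ℕ → ℂ) (hα : ∀ k : ℕ, N < k → α k = 0) (hβ : ∀ k : ℕ, N < k → β k = 0) :
    (∀ j a' b' : ℕ, j ≤ t + s → a' ≤ t + s - j → b' ≤ t + s - j →
      ∑ k ∈ Finset.range (N + 1), ((N - (t + s) + j).choose k : ℂ) / ((Real.sqrt ((N.choose (k + a') * N.choose (k + b') : ℕ)) : ℝ) : ℂ) * ((starRingEnd ℂ) (α (k + a')) * β (k + b')) = 0) ↔
    (∀ j a' b' : ℕ, j ≤ t → a' ≤ t + s - j → b' ≤ t + s - j →
      ∑ k ∈ Finset.range (N + 1), ((N - t - s + j).choose k : ℂ) / ((Real.sqrt ((N.choose (k + a') * N.choose (k + b') : ℕ)) : ℝ) : ℂ) * ((starRingEnd ℂ) (α (k + a')) * β (k + b')) = 0) := by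
  rw [Nat.sub_sub]
  constructor
  · intro h j a b hj ha hb
    exact h j a b (by omega) ha hb
  · intro h j
    induction j with
    | zero =>
      intro a b _ ha hb
      exact h 0 a b (by omega) ha hb
    | succ j ih =>
      intro a b hj ha hb
      have e1 := ih a b (by omega) (by omega) (by omega)
      have e2 := ih (a + 1) (b + 1) (by omega) (by omega) (by omega)
      have key := pascal_sum_aux_s12 N (N - (t + s) + j)
        (fun k => (((Real.sqrt ((N.choose (k + a) * N.choose (k + b) : ℕ)) : ℝ) : ℂ))⁻¹ *
          ((starRingEnd ℂ) (α (k + a)) * β (k + b)))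
        (by simp [hα (N + 1 + a) (by omega)])
      simp only [div_eq_mul_inv, mul_assoc] at e1 e2 ⊢
      simp only [← add_assoc, add_right_comm _ 1] at key e1 e2 ⊢
      simp only [add_right_comm _ _ 1] at key e1 e2 ⊢
      rw [key, e1, e2, add_zero]
end
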